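/- There exist 10 mutually orthogonal Latin squares of order 48; that is, N(48) ≥ 10. -/

import Mathlib

/-- A Latin square of order `n`: every row map and every column map is a bijection. -/
def IsLatinSquare {n : ℕ} (L : Fin n → Fin n → Fin n) : Prop :=
  (∀ i, Function.Bijective fun j => L i j) ∧ (∀ j, Function.Bijective fun i => L i j)

/-- Two squares are orthogonal if the superposition map is injective. -/
def IsOrthogonal {n : ℕ} (L₁ L₂ : Fin n → Fin n → Fin n) : Prop :=
  Function.Injective fun p : Fin n × Fin n => (L₁ p.1 p.2, L₂ p.1 p.2)

/-!
Translating the rows of a difference matrix over a group `G` turns a matrix with `r + 1` rows into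
`r` mutually orthogonal Latin squares of order `|G|`. For `G = ℤ/3 × 𝔽₄ × 𝔽₄` an 11-rowed matrix
has the rows `0`, `id` and nine maps `G → G`, namely the conjugates of three starter maps by the
powers of the affine permutation `(z, y, x) ↦ (z + 1, ω y, ω x)` of order three. Conjugation by an
affine permutation fixes `id` and preserves injectivity of differences, so it suffices to examine
those differences of nonzero rows that involve an unconjugated starter, and the starters themselves.
-/

open Function

section DifferenceMatrix

variable {n : ℕ} {ι κ G : Type*} [AddGroup G]

theorem injective_sub_comm {f g : κ → G} : Injective (f - g) ↔ Injective (g - f) := by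
  rw [← neg_sub g f]
  exact neg_injective.of_comp_iff (g - f)

/-- `D` is a difference matrix over `G`, with rows `ι` and columns `κ`: in the difference of two
distinct rows no group element is repeated. For finite `κ` and `G` of equal size this is the usual
requirement that every group element occur exactly once. -/
def IsDifferenceMatrix (D : ι → κ → G) : Prop :=
  Pairwise fun i j => Injective (D i - D j)

/-- The square with entry `f c + g` at `(c, g)`, once columns of a difference matrix and group
elements are numbered. -/
def translateSquare (eκ : κ ≃ Fin n) (eG : G ≃ Fin n) (f : κ → G) (i j : Fin n) : Fin n :=
  eG (f (eκ.symm i) + eG.symm j)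

theorem isLatinSquare_translateSquare (eκ : κ ≃ Fin n) (eG : G ≃ Fin n) {f : κ → G}
    (hf : Injective f) : IsLatinSquare (translateSquare eκ eG f) := by
  constructor
  · exact fun i => (eG.symm.trans ((Equiv.addLeft (f (eκ.symm i))).trans eG)).bijective
  · intro j
    refine Finite.injective_iff_bijective.mp ?_
    exact eG.injective.comp ((add_left_injective _).comp (hf.comp eκ.symm.injective))

theorem isOrthogonal_translateSquare (eκ : κ ≃ Fin n) (eG : G ≃ Fin n) {f₁ f₂ : κ → G}
    (hf : Injective (f₁ - f₂)) :
    IsOrthogonal (translateSquare eκ eG f₁) (translateSquare eκ eG f₂) := by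
  rintro ⟨i, j⟩ ⟨i', j'⟩ h
  obtain ⟨h₁, h₂⟩ := Prod.ext_iff.mp h
  replace h₁ : f₁ (eκ.symm i) + eG.symm j = f₁ (eκ.symm i') + eG.symm j' := eG.injective h₁
  replace h₂ : f₂ (eκ.symm i) + eG.symm j = f₂ (eκ.symm i') + eG.symm j' := eG.injective h₂
  have hdiff : (f₁ - f₂) (eκ.symm i) = (f₁ - f₂) (eκ.symm i') := by
    simpa only [add_sub_add_right_eq_sub, Pi.sub_apply] using congrArg₂ (· - ·) h₁ h₂
  obtain rfl : i = i' := eκ.symm.injective (hf hdiff)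
  obtain rfl : j = j' := eG.symm.injective (add_left_cancel h₁)
  rfl

theorem IsDifferenceMatrix.exists_mutuallyOrthogonal {D : Option ι → κ → G}
    (hD : IsDifferenceMatrix D) (eκ : κ ≃ Fin n) (eG : G ≃ Fin n) :
    ∃ L : ι → Fin n → Fin n → Fin n,
      (∀ k, IsLatinSquare (L k)) ∧ ∀ k k', k ≠ k' → IsOrthogonal (L k) (L k') := by
  refine ⟨fun k => translateSquare eκ eG (D (some k) - D none), fun k => ?_, fun k k' hk => ?_⟩
  · exact isLatinSquare_translateSquare eκ eG (hD (Option.some_ne_none k))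
  · refine isOrthogonal_translateSquare eκ eG ?_
    rw [sub_sub_sub_cancel_right]
    exact hD fun h => hk (Option.some_injective _ h)

end DifferenceMatrix

section AffineConjugation

variable {R G σ : Type*} [Ring R] [AddCommGroup G] [Module R G]

/-- Conjugation of a self-map of `G` by an affine permutation of `G`. -/
def affineConj (T : G ≃ᵃ[R] G) (f : G → G) : G → G :=
  T ∘ f ∘ T.symm

theorem affineConj_id (T : G ≃ᵃ[R] G) : affineConj T id = id :=
  T.toEquiv.self_comp_symm

theorem affineConj_sub (T : G ≃ᵃ[R] G) (f g : G → G) :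
    affineConj T f - affineConj T g = T.linear ∘ (f - g) ∘ T.symm :=
  funext fun x => (T.toAffineMap.linearMap_vsub (f (T.symm x)) (g (T.symm x))).symm

theorem injective_iterate_affineConj (T : G ≃ᵃ[R] G) {f : G → G} (hf : Injective f) (k : ℕ) :
    Injective ((affineConj T)^[k] f) := by
  induction k with
  | zero => exact hf
  | succ k ih =>
    rw [iterate_succ_apply']
    exact T.injective.comp (ih.comp T.symm.injective)

theorem injective_iterate_affineConj_sub (T : G ≃ᵃ[R] G) {f g : G → G} (h : Injective (f - g))
    (k : ℕ) : Injective ((affineConj T)^[k] f - (affineConj T)^[k] g) := by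
  induction k with
  | zero => exact h
  | succ k ih =>
    rw [iterate_succ_apply', iterate_succ_apply', affineConj_sub]
    exact T.linear.injective.comp (ih.comp T.symm.injective)

variable {m : ℕ} {F : σ → G → G}

theorem pairwise_injective_iterate_affineConj_sub (T : G ≃ᵃ[R] G)
    (hF : ∀ s t (k : Fin m), (s, 0) ≠ (t, k.val) →
      Injective (F s - (affineConj T)^[k] (F t))) :
    Pairwise fun p q : σ × Fin m =>
      Injective ((affineConj T)^[p.2] (F p.1) - (affineConj T)^[q.2] (F q.1)) := by
  have of_le : ∀ p q : σ × Fin m, p ≠ q → p.2 ≤ q.2 →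
      Injective ((affineConj T)^[p.2] (F p.1) - (affineConj T)^[q.2] (F q.1)) := by
    rintro ⟨s, i⟩ ⟨t, j⟩ hne hij
    obtain ⟨k, hk⟩ := Nat.exists_eq_add_of_le (Fin.le_def.mp hij)
    have hst : (s, 0) ≠ (t, k) := by grind
    rw [hk, iterate_add_apply]
    exact injective_iterate_affineConj_sub T (hF s t ⟨k, by omega⟩ hst) i
  intro p q hne
  rcases le_total p.2 q.2 with hle | hle
  · exact of_le p q hne hle
  · exact injective_sub_comm.mp (of_le q p hne.symm hle)

/-- The matrix whose rows are `0`, `id` and the conjugates of the starters `F s` by the first `m`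
powers of `T`. -/
def developedMatrix (T : G ≃ᵃ[R] G) (F : σ → G → G) (m : ℕ) :
    Option (Option (σ × Fin m)) → G → G
  | none => 0
  | some none => id
  | some (some (s, i)) => (affineConj T)^[i] (F s)

theorem isDifferenceMatrix_developedMatrix (T : G ≃ᵃ[R] G) (hinj : ∀ s, Injective (F s))
    (hid : ∀ s, Injective (F s - id))
    (hF : ∀ s t (k : Fin m), (s, 0) ≠ (t, k.val) →
      Injective (F s - (affineConj T)^[k] (F t))) :
    IsDifferenceMatrix (developedMatrix T F m) := by
  have row_zero : ∀ r, Injective (developedMatrix T F m (some r) - 0) := by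
    rintro (_ | ⟨s, i⟩) <;> rw [sub_zero]
    · exact injective_id
    · exact injective_iterate_affineConj T (hinj s) i
  have row_id : ∀ s (i : Fin m), Injective ((affineConj T)^[i] (F s) - id) := fun s i => by
    simpa only [iterate_fixed (affineConj_id T)] using
      injective_iterate_affineConj_sub T (hid s) i
  rintro (_ | _ | p) (_ | _ | q) hne
  · exact absurd rfl hne
  · exact injective_sub_comm.mp (row_zero none)
  · exact injective_sub_comm.mp (row_zero (some q))
  · exact row_zero none
  · exact absurd rfl hne
  · exact injective_sub_comm.mp (row_id q.1 q.2)
  · exact row_zero (some p)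
  · exact row_id p.1 p.2
  · exact pairwise_injective_iterate_affineConj_sub T hF fun h => hne (by rw [h])

end AffineConjugation

namespace TenMOLS48

/-- The additive group of the field `{0, 1, ω, ω₂}` with four elements, in coordinates with respect
to the normal basis `(ω₂, ω)`. In these coordinates the all-ones vector, that is `1`, is the
unit of the field. -/
abbrev F₄ : Type := ZMod 2 × ZMod 2

/-- A primitive element of the field with four elements. -/
abbrev ω : F₄ := (0, 1)

/-- The square `1 + ω` of `ω` in the field with four elements. -/
abbrev ω₂ : F₄ := (1, 0)

/-- Multiplication by `ω` in the field with four elements, which is not the product of the ring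
`ZMod 2 × ZMod 2`. -/
def mulω : F₄ ≃+ F₄ where
  toFun a := (a.1 + a.2, a.1)
  invFun a := (a.2, a.1 + a.2)
  left_inv := by decide
  right_inv := by decide
  map_add' := by decide

/-- The group of order 48 over which the difference matrix is constructed. -/
abbrev Grp : Type := ZMod 3 × F₄ × F₄

/-- The affine permutation `(z, y, x) ↦ (z + 1, ω y, ω x)`. -/
def shift : Grp ≃ᵃ[ℤ] Grp :=
  ((AddEquiv.refl (ZMod 3)).prodCongr (mulω.prodCongr mulω)).toIntLinearEquiv.toAffineEquiv.trans
    (AffineEquiv.constVAdd ℤ Grp (1, 0, 0))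

/-- The values `starter s (z, y, 0)`; inside each row, the second coordinate `y` runs through
`0, ω, ω₂, 1`. -/
def offset : Fin 3 → ZMod 3 → ZMod 2 → ZMod 2 → Grp :=
  ![![![![(0, 0, 0), (1, 1, 0)], ![(2, 1, 1), (0, ω, ω)]],
      ![![(1, ω, ω₂), (2, ω, ω₂)], ![(2, 1, ω₂), (0, 0, ω)]],
      ![![(1, 1, 1), (0, ω, 0)], ![(2, ω₂, 1), (1, ω₂, ω)]]],
    ![![![(0, 0, 0), (2, 0, ω)], ![(0, 1, ω), (1, 1, ω)]],
      ![![(1, ω₂, ω₂), (0, 1, 0)], ![(2, 0, 0), (2, ω, 1)]],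
      ![![(1, ω₂, 1), (2, 1, 0)], ![(1, ω₂, ω), (0, 1, ω₂)]]],
    ![![![(0, 0, 0), (0, ω, ω)], ![(1, 0, 1), (2, ω, ω₂)]],
      ![![(1, 0, ω₂), (2, 0, 1)], ![(0, 0, 1), (2, 0, 0)]],
      ![![(1, ω, 1), (1, 1, ω)], ![(0, 1, ω), (2, ω, ω)]]]]

/-- The images of `ω₂` and `ω` under the linear part of a starter in the variable `x`. -/
def direction : Fin 3 → (F₄ × F₄) × (F₄ × F₄) :=
  ![((1, ω₂), (1, 0)), ((ω, ω), (ω₂, ω₂)), ((ω, 1), (ω₂, 1))]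

/-- The three starter maps, affine over `ZMod 2` in the last variable. -/
def starter (s : Fin 3) : Grp → Grp := fun (z, y, x) =>
  offset s z y.1 y.2 + (0, x.1 • (direction s).1 + x.2 • (direction s).2)

theorem injective_starter : ∀ s, Injective (starter s) := by
  decide +kernel

theorem injective_starter_sub_id : ∀ s, Injective (starter s - id) := by
  decide +kernel

theorem injective_starter_sub_affineConj : ∀ s t (k : Fin 3), (s, 0) ≠ (t, k.val) →
    Injective (starter s - (affineConj shift)^[k] (starter t)) := by
  decide +kernel

theorem card_grp : Fintype.card Grp = 48 := by
  simp only [Fintype.card_prod, ZMod.card]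

end TenMOLS48

open TenMOLS48

/-- There exist 10 mutually orthogonal Latin squares of order 48, i.e. N(48) ≥ 10. -/
theorem ten_MOLS_of_order_48 :
    ∃ L : Fin 10 → (Fin 48 → Fin 48 → Fin 48),
      (∀ k, IsLatinSquare (L k)) ∧
      (∀ k k', k ≠ k' → IsOrthogonal (L k) (L k')) := by
  have hD : IsDifferenceMatrix (developedMatrix shift starter 3) :=
    isDifferenceMatrix_developedMatrix shift injective_starter injective_starter_sub_id
      injective_starter_sub_affineConj
  let e : Grp ≃ Fin 48 := Fintype.equivFinOfCardEq card_grp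
  obtain ⟨L, hLatin, hOrth⟩ := hD.exists_mutuallyOrthogonal e e
  let rows : Option (Fin 3 × Fin 3) ≃ Fin 10 := Fintype.equivFinOfCardEq rfl
  exact ⟨fun k => L (rows.symm k), fun k => hLatin _,
    fun k k' hk => hOrth _ _ (rows.symm.injective.ne hk)⟩
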